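/- arXiv:1801.01054 — 3 statements merged into one kernel-verified Lean document; each statement's English description precedes it below -/
import Mathlib

section
/- Let h = 2^d with d ∈ ℕ and w ≥ 2. The FHT pattern set H_{h,w} contains exactly w·h patterns, i.e. |H_{h,w}| = w·h. -/
/-!
FHT patterns. Pixels are pairs `(i, j) : ℕ × ℕ` (row `i`, column `j`).
-/

/-- Width-cyclic translation `tran_{a,b}`: shift rows up by `a` and columns by `b`
cyclically modulo the image width `w`. -/
def tran (w a b : ℕ) (T : Finset (ℕ × ℕ)) : Finset (ℕ × ℕ) :=
  T.image fun p => (p.1 + a, (p.2 + b) % w)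

/-- The column of the (unique, for FHT patterns) pixel of `T` in row `i`. -/
def colAt (T : Finset (ℕ × ℕ)) (i : ℕ) : ℕ :=
  ((T.filter fun p => p.1 = i).image Prod.snd).sup id

/-- Horizontal span `Δ(T) = (j_top - j_bot) mod w` of a pattern of height `h`. -/
def span (w h : ℕ) (T : Finset (ℕ × ℕ)) : ℕ :=
  (colAt T (h - 1) + w - colAt T 0) % w

/-- The FHT pattern sets `H_k` (mostly vertical, inclined to the right) at image width `w`:
`H_0` consists of the single bottom pixels, and `H_{k}` is obtained by stacking a translated
copy of each `T ∈ H_{k-1}` on top of itself, with horizontal shift `Δ(T) + s`, `s ∈ {0, 1}`.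
`H_{h,w}` for `h = 2 ^ d` is `FHT w d`. -/
def FHT (w : ℕ) : ℕ → Finset (Finset (ℕ × ℕ))
  | 0 => (Finset.range w).image fun j => ({(0, j)} : Finset (ℕ × ℕ))
  | k + 1 =>
      ((FHT w k) ×ˢ ({0, 1} : Finset ℕ)).image
        fun q => q.1 ∪ tran w (2 ^ k) (span w (2 ^ k) q.1 + q.2) q.1

/-!
Each step of the recursion doubles the number of patterns. The rows below `2 ^ k` of
`T ∪ tran w (2 ^ k) (Δ(T) + s) T` recover `T`, and the remaining rows recover the translate. Since
`T` has a single pixel in its bottom row, the translate determines the shift `Δ(T) + s` modulo `w`,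
and hence `s`, because `0` and `1` are distinct modulo `w`.
-/

/-- `T` is a pattern of height `h`: it lies in the rows `0, …, h - 1` and has exactly one pixel in
each of them. No bound is imposed on the columns. -/
structure IsPattern (h : ℕ) (T : Finset (ℕ × ℕ)) : Prop where
  fst_lt : ∀ p ∈ T, p.1 < h
  existsUnique_mem : ∀ i < h, ∃! j, (i, j) ∈ T

section Stacking

variable {w m n b c : ℕ} {T T' U U' : Finset (ℕ × ℕ)}

theorem mem_tran {p : ℕ × ℕ} :
    p ∈ tran w n b T ↔ ∃ q ∈ T, (q.1 + n, (q.2 + b) % w) = p :=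
  Finset.mem_image

theorem le_fst_of_mem_tran {p : ℕ × ℕ} (hp : p ∈ tran w n b T) : n ≤ p.1 := by
  obtain ⟨q, -, rfl⟩ := mem_tran.1 hp
  exact Nat.le_add_left n q.1

theorem add_left_mem_tran {i j : ℕ} :
    (n + i, j) ∈ tran w n b T ↔ ∃ j', (i, j') ∈ T ∧ (j' + b) % w = j := by
  simp only [mem_tran, Prod.exists, Prod.mk.injEq, add_comm n, Nat.add_right_cancel_iff]
  grind

theorem filter_fst_lt_union_tran (hT : ∀ p ∈ T, p.1 < n) :
    (T ∪ tran w n b U).filter (·.1 < n) = T := by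
  rw [Finset.filter_union, Finset.filter_true_of_mem hT,
    Finset.filter_false_of_mem fun _ hp => (le_fst_of_mem_tran hp).not_gt, Finset.union_empty]

theorem filter_le_fst_union_tran (hT : ∀ p ∈ T, p.1 < n) :
    (T ∪ tran w n b U).filter (n ≤ ·.1) = tran w n b U := by
  rw [Finset.filter_union, Finset.filter_false_of_mem fun p hp => (hT p hp).not_ge,
    Finset.filter_true_of_mem fun _ hp => le_fst_of_mem_tran hp, Finset.empty_union]

theorem eq_and_tran_eq_of_union_tran_eq (hT : ∀ p ∈ T, p.1 < n) (hU : ∀ p ∈ U, p.1 < n)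
    (h : T ∪ tran w n b T' = U ∪ tran w n c U') : T = U ∧ tran w n b T' = tran w n c U' := by
  constructor
  · rw [← filter_fst_lt_union_tran hT, h, filter_fst_lt_union_tran hU]
  · rw [← filter_le_fst_union_tran hT, h, filter_le_fst_union_tran hU]

namespace IsPattern

theorem singleton (j : ℕ) : IsPattern 1 {(0, j)} where
  fst_lt := by simp
  existsUnique_mem i hi := by
    obtain rfl := Nat.lt_one_iff.1 hi
    exact ⟨j, by simp, by simp⟩

theorem union_tran (hT : IsPattern m T) (hU : IsPattern n U) :
    IsPattern (m + n) (T ∪ tran w m b U) where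
  fst_lt p hp := by
    rcases Finset.mem_union.1 hp with hp | hp
    · exact (hT.fst_lt p hp).trans_le (Nat.le_add_right m n)
    · obtain ⟨q, hq, rfl⟩ := mem_tran.1 hp
      have := hU.fst_lt q hq
      lia
  existsUnique_mem i hi := by
    rcases lt_or_ge i m with him | hmi
    · have hmem (j : ℕ) : (i, j) ∈ T ∪ tran w m b U ↔ (i, j) ∈ T :=
        Finset.mem_union.trans
          (or_iff_left fun hp => (le_fst_of_mem_tran hp).not_gt him)
      simpa only [hmem] using hT.existsUnique_mem i him
    · obtain ⟨i, rfl⟩ := Nat.exists_eq_add_of_le hmi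
      have hmem (j : ℕ) : (m + i, j) ∈ T ∪ tran w m b U ↔
          ∃ j', (i, j') ∈ U ∧ (j' + b) % w = j :=
        (Finset.mem_union.trans
          (or_iff_right fun hp => (hT.fst_lt _ hp).not_ge hmi)).trans add_left_mem_tran
      obtain ⟨j, hj, hj_unique⟩ := hU.existsUnique_mem i (Nat.add_lt_add_iff_left.1 hi)
      simp only [hmem]
      refine ⟨(j + b) % w, ⟨j, hj, rfl⟩, ?_⟩
      rintro _ ⟨j', hj', rfl⟩
      rw [hj_unique j' hj']

theorem modEq_of_tran_eq_tran (hT : IsPattern m T) (hm : 0 < m)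
    (h : tran w n b T = tran w n c T) : b ≡ c [MOD w] := by
  obtain ⟨j, hj, hj_unique⟩ := hT.existsUnique_mem 0 hm
  have hmem : (n + 0, (j + b) % w) ∈ tran w n c T := h ▸ add_left_mem_tran.2 ⟨j, hj, rfl⟩
  obtain ⟨j', hj', hmod⟩ := add_left_mem_tran.1 hmem
  obtain rfl := hj_unique j' hj'
  exact Nat.ModEq.add_left_cancel' j' hmod.symm

end IsPattern

end Stacking

theorem isPattern_of_mem_fht {w k : ℕ} {T : Finset (ℕ × ℕ)} (hT : T ∈ FHT w k) :
    IsPattern (2 ^ k) T := by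
  induction k generalizing T with
  | zero =>
    obtain ⟨j, -, rfl⟩ := Finset.mem_image.1 hT
    exact .singleton j
  | succ k ih =>
    obtain ⟨⟨U, s⟩, hUs, rfl⟩ := Finset.mem_image.1 hT
    have hU : IsPattern (2 ^ k) U := ih (Finset.mem_product.1 hUs).1
    rw [pow_succ, mul_two]
    exact hU.union_tran hU

theorem card_fht_zero (w : ℕ) : (FHT w 0).card = w := by
  have hinj : Function.Injective fun j : ℕ => ({(0, j)} : Finset (ℕ × ℕ)) :=
    Finset.singleton_injective.comp (Prod.mk_right_injective 0)
  rw [FHT, Finset.card_image_of_injective _ hinj, Finset.card_range]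

theorem injOn_union_tran_span {w : ℕ} (hw : 2 ≤ w) (k : ℕ) :
    Set.InjOn
      (fun q : Finset (ℕ × ℕ) × ℕ => q.1 ∪ tran w (2 ^ k) (span w (2 ^ k) q.1 + q.2) q.1)
      (FHT w k ×ˢ ({0, 1} : Finset ℕ) : Finset _) := by
  rintro ⟨T, s⟩ hTs ⟨U, t⟩ hUt h
  have lt_of_mem {r : ℕ} (hr : r ∈ ({0, 1} : Finset ℕ)) : r < w := by
    simp only [Finset.mem_insert, Finset.mem_singleton] at hr
    lia
  obtain ⟨hT, hs⟩ := Finset.mem_product.1 (Finset.mem_coe.1 hTs)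
  obtain ⟨hU, ht⟩ := Finset.mem_product.1 (Finset.mem_coe.1 hUt)
  have hT_pat := isPattern_of_mem_fht hT
  obtain ⟨rfl, htran⟩ :=
    eq_and_tran_eq_of_union_tran_eq hT_pat.fst_lt (isPattern_of_mem_fht hU).fst_lt h
  have hst : s ≡ t [MOD w] :=
    (hT_pat.modEq_of_tran_eq_tran (Nat.two_pow_pos k) htran).add_left_cancel' _
  rw [hst.eq_of_lt_of_lt (lt_of_mem hs) (lt_of_mem ht)]

theorem card_fht_succ {w : ℕ} (hw : 2 ≤ w) (k : ℕ) :
    (FHT w (k + 1)).card = (FHT w k).card * 2 := by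
  rw [FHT, Finset.card_image_of_injOn (injOn_union_tran_span hw k), Finset.card_product,
    Finset.card_pair zero_ne_one]

/-- For `h = 2 ^ d` and `w ≥ 2`, the FHT pattern set `H_{h,w}` contains exactly
`w · h` patterns. -/
theorem fht_card (w d : ℕ) (hw : 2 ≤ w) : (FHT w d).card = w * 2 ^ d := by
  induction d with
  | zero => rw [card_fht_zero, pow_zero, mul_one]
  | succ k ih => rw [card_fht_succ hw, ih, pow_succ, mul_assoc]
end

section
/- Let h = 2^d with d ≥ 1 and w ≥ 2, and let I_b = {p_{ij} : 0 ≤ i < h/2} be the bottom half of the image. For every T ∈ H_{h,w} there exists a unique T' ∈ H_{h,w} such that T ∩ I_b = T ∩ T' (the bottom-sibling of T). The analogous statement holds with I_b replaced by the top half I_t = {p_{ij} : h/2 ≤ i ≤ h−1} (top-siblings). -/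
/-!
A pattern in `H_{k+1}` is its lower half `T` together with the translate of `T` by `Δ(T) + s`, so
it is determined by `T` and the slack `s ∈ {0, 1}`. Two patterns with the same slack that agree on
one half agree everywhere: for the upper half, this is because a pattern and its translates have
the same span, and the span can be read off the upper half. A sibling must therefore have the
other slack `t`, and its lower half must be `T` (bottom-sibling) or `T` shifted by `s - t`
(top-sibling).
-/

theorem forall_lt_two_mul_iff {n : ℕ} {p : ℕ → Prop} :
    (∀ i < 2 * n, p i) ↔ (∀ i < n, p i) ∧ ∀ i < n, p (n + i) := by
  refine ⟨fun h => ⟨fun i hi => h i (by omega), fun i hi => h _ (by omega)⟩, fun h i hi => ?_⟩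
  rcases lt_or_ge i n with hin | hni
  · exact h.1 i hin
  · obtain ⟨j, rfl⟩ := Nat.exists_eq_add_of_le hni
    exact h.2 j (by omega)

section DoubleColumn

variable {G : Type*} [AddCommGroup G]

/-- The doubling step of the FHT on column functions: the function `f` on rows `0, …, n - 1` is
followed by its copy shifted by the span `f (n - 1) - f 0` plus a slack `s`. Only the values on
rows `i < 2 * n` are meaningful. -/
def doubleColumn (n : ℕ) (s : G) (f : ℕ → G) (i : ℕ) : G :=
  if i < n then f i else f (i - n) + (f (n - 1) - f 0) + s

theorem doubleColumn_of_lt {n i : ℕ} (hi : i < n) (s : G) (f : ℕ → G) :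
    doubleColumn n s f i = f i :=
  if_pos hi

theorem doubleColumn_add (n i : ℕ) (s : G) (f : ℕ → G) :
    doubleColumn n s f (n + i) = f i + (f (n - 1) - f 0) + s := by
  simp [doubleColumn]

theorem doubleColumn_congr {n : ℕ} {f g : ℕ → G} (s : G) (h : ∀ i < n, f i = g i) :
    ∀ i < 2 * n, doubleColumn n s f i = doubleColumn n s g i := by
  refine forall_lt_two_mul_iff.2 ⟨fun i hi => ?_, fun i hi => ?_⟩
  · rw [doubleColumn_of_lt hi, doubleColumn_of_lt hi, h i hi]
  · rw [doubleColumn_add, doubleColumn_add, h i hi, h (n - 1) (by omega), h 0 (by omega)]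

theorem doubleColumn_add_const (n : ℕ) (s c : G) (f : ℕ → G) :
    doubleColumn n s (fun i => f i + c) = fun i => doubleColumn n s f i + c := by
  funext i
  simp only [doubleColumn]
  split_ifs <;> abel

theorem forall_doubleColumn_eq_iff_lt {n : ℕ} (hn : 0 < n) {s t : G} {f g : ℕ → G} :
    (∀ i < 2 * n, (doubleColumn n s f i = doubleColumn n t g i ↔ i < n)) ↔
      s ≠ t ∧ ∀ i < n, g i = f i := by
  rw [forall_lt_two_mul_iff]
  constructor
  · rintro ⟨lower, upper⟩
    have hgf : ∀ i < n, g i = f i := fun i hi => by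
      simpa only [doubleColumn_of_lt hi] using ((lower i hi).2 hi).symm
    refine ⟨?_, hgf⟩
    rintro rfl
    have agree := doubleColumn_congr s hgf (n + 0) (by omega)
    exact absurd ((upper 0 hn).1 agree.symm) (by omega)
  · rintro ⟨hst, hgf⟩
    refine ⟨fun i hi => ?_, fun i hi => ?_⟩
    · simp only [doubleColumn_of_lt hi, hgf i hi, hi]
    · simp [doubleColumn_add, hgf i hi, hgf (n - 1) (by omega), hgf 0 hn, hst]

theorem eq_add_const_of_doubleColumn_upper_eq {n : ℕ} {s t : G} {f g : ℕ → G}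
    (h : ∀ i < n, doubleColumn n s f (n + i) = doubleColumn n t g (n + i)) :
    ∀ i < n, g i = f i + (s - t) := by
  simp only [doubleColumn_add] at h
  intro i hi
  have span_eq : g (n - 1) - g 0 = f (n - 1) - f 0 := by
    have diff := congrArg₂ (· - ·) (h (n - 1) (by omega)) (h 0 (by omega))
    simpa only [add_sub_add_right_eq_sub] using diff.symm
  have hfg := h i hi
  rw [span_eq, add_right_comm, add_right_comm (g i), add_right_cancel_iff] at hfg
  rw [← add_sub_assoc, hfg, add_sub_cancel_right]

theorem forall_doubleColumn_eq_iff_ge {n : ℕ} (hn : 0 < n) {s t : G} {f g : ℕ → G} :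
    (∀ i < 2 * n, (doubleColumn n s f i = doubleColumn n t g i ↔ n ≤ i)) ↔
      s ≠ t ∧ ∀ i < n, g i = f i + (s - t) := by
  rw [forall_lt_two_mul_iff]
  constructor
  · rintro ⟨lower, upper⟩
    have hgf : ∀ i < n, g i = f i + (s - t) :=
      eq_add_const_of_doubleColumn_upper_eq fun i hi => (upper i hi).2 (by omega)
    refine ⟨?_, hgf⟩
    rintro rfl
    have agree : doubleColumn n s f 0 = doubleColumn n s g 0 := by
      simp [doubleColumn_of_lt hn, hgf 0 hn]
    exact absurd ((lower 0 hn).1 agree) (by omega)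
  · rintro ⟨hst, hgf⟩
    refine ⟨fun i hi => ?_, fun i hi => ?_⟩
    · simp [doubleColumn_of_lt hi, hgf i hi, sub_eq_zero, hst, hi]
    · have agree : doubleColumn n s f (n + i) = doubleColumn n t g (n + i) := by
        rw [doubleColumn_add, doubleColumn_add, hgf i hi, hgf (n - 1) (by omega), hgf 0 hn]
        abel
      simp [agree]

variable [One G]

/-- The column functions of the patterns in `H_k`, with values in an arbitrary group in place of
the columns modulo `w`. -/
inductive IsFHTColumn : ℕ → (ℕ → G) → Prop
  | const (c : G) : IsFHTColumn 0 fun _ => c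
  | double {k : ℕ} (s : G) (f : ℕ → G) (hs : s = 0 ∨ s = 1) (hf : IsFHTColumn k f) :
      IsFHTColumn (k + 1) (doubleColumn (2 ^ k) s f)

theorem IsFHTColumn.add_const {k : ℕ} {f : ℕ → G} (hf : IsFHTColumn k f) (c : G) :
    IsFHTColumn k fun i => f i + c := by
  induction hf with
  | const b => exact .const (b + c)
  | double s f hs _ ih => exact doubleColumn_add_const _ s c f ▸ .double s _ hs ih

end DoubleColumn

theorem existsUnique_zero_or_one_ne {α : Type*} [Zero α] [One α] [NeZero (1 : α)] {s : α}
    (hs : s = 0 ∨ s = 1) : ∃! t : α, (t = 0 ∨ t = 1) ∧ s ≠ t := by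
  rcases hs with rfl | rfl
  · exact ⟨1, by simp, by grind⟩
  · exact ⟨0, by simp, by grind⟩

section ColumnPattern

variable {w n : ℕ}

/-- The pattern of height `n` whose pixel in row `i` lies in column `f i`, columns being counted
modulo the image width `w`. -/
def columnPattern (n : ℕ) (f : ℕ → ZMod w) : Finset (ℕ × ℕ) :=
  (Finset.range n).image fun i => (i, (f i).val)

theorem mem_columnPattern {f : ℕ → ZMod w} {p : ℕ × ℕ} :
    p ∈ columnPattern n f ↔ p.1 < n ∧ (f p.1).val = p.2 := by
  rcases p with ⟨i, j⟩
  simp [columnPattern]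

theorem columnPattern_congr {f g : ℕ → ZMod w} (h : ∀ i < n, f i = g i) :
    columnPattern n f = columnPattern n g :=
  Finset.image_congr fun i hi => by simp only [h i (Finset.mem_range.1 hi)]

theorem colAt_columnPattern (f : ℕ → ZMod w) {i : ℕ} (hi : i < n) :
    colAt (columnPattern n f) i = (f i).val := by
  have row : (columnPattern n f).filter (fun p => p.1 = i) = {(i, (f i).val)} := by
    ext ⟨a, b⟩
    simp only [Finset.mem_filter, mem_columnPattern, Finset.mem_singleton, Prod.mk.injEq]
    grind
  simp [colAt, row]

variable [NeZero w]

theorem columnPattern_inter_eq_filter_iff {f g : ℕ → ZMod w} (P : ℕ → Prop) [DecidablePred P] :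
    (columnPattern n f ∩ columnPattern n g = (columnPattern n f).filter fun p => P p.1) ↔
      ∀ i < n, (f i = g i ↔ P i) := by
  have val_eq_iff : ∀ i, (g i).val = (f i).val ↔ f i = g i := fun i =>
    (ZMod.val_injective w).eq_iff.trans eq_comm
  simp only [Finset.ext_iff, Finset.mem_inter, Finset.mem_filter, mem_columnPattern, Prod.forall]
  refine ⟨fun h i hi => ?_, fun h i j => ?_⟩
  · simpa [hi, val_eq_iff] using h i (f i).val
  · grind

theorem natCast_span_columnPattern (f : ℕ → ZMod w) (hn : 0 < n) :
    (span w n (columnPattern n f) : ZMod w) = f (n - 1) - f 0 := by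
  have bottom_le : (f 0).val ≤ (f (n - 1)).val + w := by
    have := ZMod.val_lt (f 0)
    omega
  rw [span, colAt_columnPattern f (by omega), colAt_columnPattern f hn, ZMod.natCast_mod,
    Nat.cast_sub bottom_le]
  simp

theorem columnPattern_union_tran (f : ℕ → ZMod w) (hn : 0 < n) (s : ℕ) :
    columnPattern n f ∪ tran w n (span w n (columnPattern n f) + s) (columnPattern n f) =
      columnPattern (2 * n) (doubleColumn n s f) := by
  have val_upper : ∀ i, (doubleColumn n (s : ZMod w) f (n + i)).val =
      ((f i).val + (span w n (columnPattern n f) + s)) % w := fun i => by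
    rw [doubleColumn_add, ← natCast_span_columnPattern f hn, ← ZMod.val_natCast]
    simp [add_assoc]
  ext ⟨i, j⟩
  simp only [Finset.mem_union, tran, Finset.mem_image, mem_columnPattern, Prod.exists,
    Prod.mk.injEq]
  rcases lt_or_ge i n with hin | hni
  · rw [doubleColumn_of_lt hin]
    grind
  · obtain ⟨i, rfl⟩ := Nat.exists_eq_add_of_le hni
    rw [val_upper]
    grind

theorem mem_FHT_iff {k : ℕ} {T : Finset (ℕ × ℕ)} :
    T ∈ FHT w k ↔ ∃ f : ℕ → ZMod w, IsFHTColumn k f ∧ columnPattern (2 ^ k) f = T := by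
  induction k generalizing T with
  | zero =>
    simp only [FHT, Finset.mem_image, Finset.mem_range]
    constructor
    · rintro ⟨j, hj, rfl⟩
      exact ⟨_, .const (j : ZMod w), by simp [columnPattern, ZMod.val_cast_of_lt hj]⟩
    · rintro ⟨_, ⟨c⟩, rfl⟩
      exact ⟨c.val, c.val_lt, by simp [columnPattern]⟩
  | succ k ih =>
    simp only [FHT, Finset.mem_image, Finset.mem_product, Prod.exists, pow_succ' 2 k]
    constructor
    · rintro ⟨B, s, ⟨hB, hs⟩, rfl⟩
      obtain ⟨f, hf, rfl⟩ := ih.1 hB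
      rw [columnPattern_union_tran f (by positivity)]
      refine ⟨_, .double (s : ZMod w) f ?_ hf, rfl⟩
      rcases (by simpa using hs : s = 0 ∨ s = 1) with rfl | rfl <;> simp
    · rintro ⟨_, _ | ⟨s, f, hs, hf⟩, rfl⟩
      obtain ⟨b, hb, rfl⟩ : ∃ b ∈ ({0, 1} : Finset ℕ), (b : ZMod w) = s := by
        simpa [eq_comm] using hs
      exact ⟨_, b, ⟨ih.2 ⟨f, hf, rfl⟩, hb⟩, columnPattern_union_tran f (by positivity) b⟩

end ColumnPattern

theorem existsUnique_sibling {w k : ℕ} [Fact (1 < w)] {P : ℕ → Prop} [DecidablePred P]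
    (shift : ZMod w → ZMod w → ZMod w)
    (sibling_iff : ∀ s t f g,
      (∀ i < 2 * 2 ^ k, (doubleColumn (2 ^ k) s f i = doubleColumn (2 ^ k) t g i ↔ P i)) ↔
        s ≠ t ∧ ∀ i < 2 ^ k, g i = f i + shift s t)
    {T : Finset (ℕ × ℕ)} (hT : T ∈ FHT w (k + 1)) :
    ∃! T', T' ∈ FHT w (k + 1) ∧ T ∩ T' = T.filter fun p => P p.1 := by
  have : NeZero w := .of_gt (Fact.out : 1 < w)
  obtain ⟨_, _ | ⟨s, f, hs, hf⟩, rfl⟩ := mem_FHT_iff.1 hT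
  obtain ⟨t, ⟨ht, hst⟩, t_unique⟩ := existsUnique_zero_or_one_ne hs
  refine ⟨_, ⟨mem_FHT_iff.2 ⟨_, .double t _ ht (hf.add_const (shift s t)), rfl⟩, ?_⟩, ?_⟩
  · rw [columnPattern_inter_eq_filter_iff, pow_succ', sibling_iff]
    exact ⟨hst, fun _ _ => rfl⟩
  · rintro T' ⟨hT', hinter⟩
    obtain ⟨_, _ | ⟨t', g, ht', hg⟩, rfl⟩ := mem_FHT_iff.1 hT'
    rw [columnPattern_inter_eq_filter_iff, pow_succ', sibling_iff] at hinter
    obtain ⟨hst', hgf⟩ := hinter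
    obtain rfl := t_unique t' ⟨ht', hst'⟩
    rw [pow_succ']
    exact columnPattern_congr (doubleColumn_congr t' hgf)

/-- For `h = 2 ^ (d+1)` (so `d + 1 ≥ 1`) and `w ≥ 2`: every `T ∈ H_{h,w}` has a unique
bottom-sibling, i.e. a unique `T' ∈ H_{h,w}` with `T ∩ T' = T ∩ I_b` where
`I_b = {p_{ij} : i < h/2}` is the bottom half of the image; and likewise a unique
top-sibling with respect to the top half `I_t = {p_{ij} : h/2 ≤ i}`. -/
theorem fht_siblings (w d : ℕ) (hw : 2 ≤ w) :
    (∀ T ∈ FHT w (d + 1), ∃! T', T' ∈ FHT w (d + 1) ∧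
        T ∩ T' = T.filter fun p => p.1 < 2 ^ d) ∧
    (∀ T ∈ FHT w (d + 1), ∃! T', T' ∈ FHT w (d + 1) ∧
        T ∩ T' = T.filter fun p => 2 ^ d ≤ p.1) := by
  have : Fact (1 < w) := ⟨hw⟩
  have height_pos : 0 < 2 ^ d := by positivity
  constructor <;> intro T hT
  · exact existsUnique_sibling (P := (· < 2 ^ d)) (fun _ _ => 0)
      (fun _ _ _ _ => by simpa only [add_zero] using forall_doubleColumn_eq_iff_lt height_pos) hT
  · exact existsUnique_sibling (P := (2 ^ d ≤ ·)) (fun s t => s - t)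
      (fun _ _ _ _ => forall_doubleColumn_eq_iff_ge height_pos) hT
end

section
/- For every finite nonempty pattern set 𝒯 of nonempty finite patterns on an image, every binary-union straight-line program computing 𝒯 has at least (3/2) · (V(𝒯)/r(𝒯)) · log₃(V(𝒯)/|𝒯|) steps; i.e. OR2(𝒯) ≥ (3/2)·(V(𝒯)/r(𝒯))·log₃(V(𝒯)/|𝒯|). -/
/-- An admissible operand of step `t` of a binary-union straight-line program
`s : Fin g → Finset α`: a singleton pixel or some earlier step. -/
def IsOperand {α : Type*} {g : ℕ} (s : Fin g → Finset α) (t : Fin g) (A : Finset α) : Prop :=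
  (∃ p, A = {p}) ∨ ∃ u, u < t ∧ A = s u

/-- `s` is a binary-union straight-line program: each step is the union of two admissible
operands. -/
def ValidProg {α : Type*} [DecidableEq α] {g : ℕ} (s : Fin g → Finset α) : Prop :=
  ∀ t, ∃ A B, IsOperand s t A ∧ IsOperand s t B ∧ s t = A ∪ B

/-- The program `s` computes the pattern family `𝒯`: every pattern of `𝒯` is a singleton
or appears among the steps of `s`. -/
def Computes {α : Type*} {g : ℕ} (s : Fin g → Finset α) (𝒯 : Finset (Finset α)) : Prop :=
  ∀ T ∈ 𝒯, (∃ p, T = {p}) ∨ ∃ t, s t = T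

/-- `OR2 𝒯` is the minimal number of steps (binary gates) over all binary-union
straight-line programs computing `𝒯`. -/
noncomputable def OR2 {α : Type*} [DecidableEq α] (𝒯 : Finset (Finset α)) : ℕ :=
  sInf {g | ∃ s : Fin g → Finset α, ValidProg s ∧ Computes s 𝒯}

/-- The common intersection `⋂_{T ∈ M} T` of a family of patterns
(equal to `∅` when `M` is empty). -/
def interF (M : Finset (Finset (ℕ × ℕ))) : Finset (ℕ × ℕ) :=
  (M.sup id).filter fun p => ∀ T ∈ M, p ∈ T

/-- The volume `V(𝒯) = Σ_{T ∈ 𝒯} |T|` of a pattern set. -/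
def vol (𝒯 : Finset (Finset (ℕ × ℕ))) : ℕ := ∑ T ∈ 𝒯, T.card

/-- The self-intersection measure `r(𝒯)`: the maximum of the intersection area
`S(R) = |R| · |⋂_{T ∈ R} T|` over nonempty subfamilies `R ⊆ 𝒯`. -/
def rmeas (𝒯 : Finset (Finset (ℕ × ℕ))) : ℕ :=
  (𝒯.powerset.filter fun R => R.Nonempty).sup fun R => R.card * (interF R).card

/-! In a program, `T` unfolds into a binary tree whose leaves are single pixels. Splitting the
pixels of `T` along this tree, every inner node costs the number of pixels routed through it, and
concavity of entropy bounds the total cost from below by `|T| log₂ |T|`. A step `A` pays at most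
`|A|` towards each pattern containing it, hence at most `r(𝒯)` in total. So
`Σ |T| log₂ |T| ≤ g · r(𝒯)`, and Jensen bounds the left-hand side below by
`V(𝒯) log₂ (V(𝒯) / |𝒯|)`. Finally `3 / 2 ≤ log₂ 3`. -/

section Logarithm

open Real

theorem three_halves_mul_logb_three_le_logb_two {x : ℝ} (hx : 1 ≤ x) :
    3 / 2 * logb 3 x ≤ logb 2 x := by
  have three_halves_le : 3 / 2 ≤ logb 2 3 := by
    have : logb 2 (2 ^ 3) ≤ logb 2 (3 ^ 2) :=
      logb_le_logb_of_le one_lt_two (by norm_num) (by norm_num)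
    rw [logb_pow, logb_pow, logb_self_eq_one one_lt_two] at this
    push_cast at this
    linarith
  calc 3 / 2 * logb 3 x ≤ logb 2 3 * logb 3 x := by
        gcongr
        exact logb_nonneg (by norm_num) hx
    _ = logb 2 x := mul_logb (by norm_num) (by norm_num) (by norm_num)

theorem sum_mul_logb_sum_div_card_le {ι : Type*} {b : ℝ} (hb : 1 < b) {s : Finset ι}
    (hs : s.Nonempty) {f : ι → ℝ} (hf : ∀ i ∈ s, 0 ≤ f i) :
    (∑ i ∈ s, f i) * logb b ((∑ i ∈ s, f i) / s.card) ≤ ∑ i ∈ s, f i * logb b (f i) := by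
  have hcard : (0 : ℝ) < s.card := by exact_mod_cast hs.card_pos
  have jensen := convexOn_mul_log.map_sum_le (t := s) (w := fun _ => (s.card : ℝ)⁻¹) (p := f)
    (fun _ _ => by positivity) (by simp [hcard.ne']) hf
  simp only [smul_eq_mul, ← Finset.mul_sum] at jensen
  rw [← div_eq_inv_mul, ← div_eq_inv_mul, div_mul_eq_mul_div,
    div_le_div_iff_of_pos_right hcard] at jensen
  simp only [logb, ← mul_div_assoc, ← Finset.sum_div]
  exact div_le_div_of_nonneg_right jensen (log_pos hb).le

theorem add_mul_logb_two_add_le {a b : ℝ} (ha : 0 ≤ a) (hb : 0 ≤ b) :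
    (a + b) * logb 2 (a + b) ≤ a * logb 2 a + b * logb 2 b + (a + b) := by
  have jensen := sum_mul_logb_sum_div_card_le one_lt_two Finset.univ_nonempty
    (f := fun i : Bool => cond i a b) (by simp [ha, hb])
  simp only [Fintype.sum_bool, cond_true, cond_false, Finset.card_univ, Fintype.card_bool,
    Nat.cast_ofNat] at jensen
  rcases eq_or_ne (a + b) 0 with h | h
  · simpa [h] using jensen
  · rw [logb_div h two_ne_zero, logb_self_eq_one one_lt_two] at jensen
    linarith

end Logarithm

section Program

open Finset Real

variable {α : Type*} {g : ℕ} {s : Fin g → Finset α} {𝒯 : Finset (Finset α)}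

theorem card_mul_logb_card_of_subset_singleton (b : ℝ) {Q : Finset α} {p : α} (hQ : Q ⊆ {p}) :
    (#Q : ℝ) * logb b #Q = 0 := by
  rcases subset_singleton_iff.1 hQ with rfl | rfl <;> simp

variable [DecidableEq α]

theorem Computes.snoc (hc : Computes s 𝒯) (A : Finset α) :
    Computes (Fin.snoc (α := fun _ => Finset α) s A) (insert A 𝒯) := by
  intro T hT
  rcases mem_insert.1 hT with rfl | hT
  · exact Or.inr ⟨Fin.last g, Fin.snoc_last ..⟩
  · exact (hc T hT).imp_right fun ⟨t, ht⟩ => ⟨t.castSucc, by rw [Fin.snoc_castSucc, ht]⟩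

theorem ValidProg.snoc_union {A B : Finset α} (hs : ValidProg s) (hc : Computes s {A, B}) :
    ValidProg (Fin.snoc (α := fun _ => Finset α) s (A ∪ B)) := by
  intro t
  induction t using Fin.lastCases with
  | last =>
    have operand : ∀ C ∈ ({A, B} : Finset (Finset α)),
        IsOperand (Fin.snoc (α := fun _ => Finset α) s (A ∪ B)) (Fin.last g) C := fun C hC =>
      (hc C hC).imp_right fun ⟨u, hu⟩ =>
        ⟨u.castSucc, Fin.castSucc_lt_last u, by rw [Fin.snoc_castSucc, hu]⟩
    exact ⟨A, B, operand A (by simp), operand B (by simp), Fin.snoc_last ..⟩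
  | cast t =>
    have operand : ∀ C, IsOperand s t C →
        IsOperand (Fin.snoc (α := fun _ => Finset α) s (A ∪ B)) t.castSucc C := fun C hC =>
      hC.imp_right fun ⟨u, hut, hu⟩ =>
        ⟨u.castSucc, Fin.castSucc_lt_castSucc_iff.2 hut, by rw [Fin.snoc_castSucc, hu]⟩
    obtain ⟨C, D, hC, hD, hCD⟩ := hs t
    exact ⟨C, D, operand C hC, operand D hD, by rw [Fin.snoc_castSucc, hCD]⟩

theorem exists_validProg_computes_insert {T : Finset α} (hT : T.Nonempty)
    (h : ∃ (g : ℕ) (s : Fin g → Finset α), ValidProg s ∧ Computes s 𝒯) :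
    ∃ (g : ℕ) (s : Fin g → Finset α), ValidProg s ∧ Computes s (insert T 𝒯) := by
  induction hT using Finset.Nonempty.cons_induction with
  | singleton a =>
    obtain ⟨g, s, hs, hc⟩ := h
    exact ⟨g, s, hs, forall_mem_insert _ _ _ |>.2 ⟨Or.inl ⟨a, rfl⟩, hc⟩⟩
  | cons a T ha _ ih =>
    obtain ⟨g, s, hs, hc⟩ := ih
    obtain ⟨hcT, hc𝒯⟩ := forall_mem_insert _ _ _ |>.1 hc
    have hcaT : Computes s {{a}, T} := by
      simpa [Computes] using hcT
    rw [cons_eq_insert, insert_eq]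
    exact ⟨g + 1, _, hs.snoc_union hcaT, Computes.snoc hc𝒯 _⟩

theorem exists_validProg_computes (hT : ∀ T ∈ 𝒯, T.Nonempty) :
    ∃ (g : ℕ) (s : Fin g → Finset α), ValidProg s ∧ Computes s 𝒯 := by
  induction 𝒯 using Finset.induction_on with
  | empty => exact ⟨0, Fin.elim0, fun t => t.elim0, by simp [Computes]⟩
  | insert T 𝒯 _ ih =>
    obtain ⟨hT, h𝒯⟩ := forall_mem_insert _ _ _ |>.1 hT
    exact exists_validProg_computes_insert hT (ih h𝒯)

theorem exists_validProg_or2_computes (hT : ∀ T ∈ 𝒯, T.Nonempty) :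
    ∃ s : Fin (OR2 𝒯) → Finset α, ValidProg s ∧ Computes s 𝒯 :=
  Nat.sInf_mem (exists_validProg_computes hT)

theorem sum_card_inter_inter_add_sum_card_inter_sdiff {ι : Type*} (U : Finset ι)
    (s : ι → Finset α) (Q A : Finset α) :
    ∑ u ∈ U, #(s u ∩ (Q ∩ A)) + ∑ u ∈ U, #(s u ∩ (Q \ A)) = ∑ u ∈ U, #(s u ∩ Q) := by
  simp only [← sum_add_distrib, ← inter_assoc, ← inter_sdiff_assoc, card_inter_add_card_sdiff]

theorem card_add_sum_card_inter_lt {t : Fin g} {Q : Finset α} (hQ : Q ⊆ s t) :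
    #Q + ∑ u with u < t ∧ s u ⊆ s t, #(s u ∩ Q) = ∑ u with u ≤ t ∧ s u ⊆ s t, #(s u ∩ Q) := by
  have insert_self : insert t ({u | u < t ∧ s u ⊆ s t} : Finset (Fin g)) =
      ({u | u ≤ t ∧ s u ⊆ s t} : Finset (Fin g)) := by
    ext u
    grind
  rw [← insert_self, sum_insert (by simp), inter_eq_right.2 hQ]

/- Restricting to subsets `Q` of the step lets each pixel be routed to only one of the two
operands, so that a step shared by both of them is never counted twice for the same pixel. -/
theorem ValidProg.card_mul_logb_card_le (hs : ValidProg s) (t : Fin g) {Q : Finset α}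
    (hQ : Q ⊆ s t) :
    (#Q : ℝ) * logb 2 #Q ≤ (∑ u with u ≤ t ∧ s u ⊆ s t, #(s u ∩ Q) : ℕ) := by
  induction t using WellFoundedLT.induction generalizing Q with
  | ind t ih =>
  have operand_bound {C R : Finset α} (hC : IsOperand s t C) (hCt : C ⊆ s t) (hR : R ⊆ C) :
      (#R : ℝ) * logb 2 #R ≤ (∑ u with u < t ∧ s u ⊆ s t, #(s u ∩ R) : ℕ) := by
    rcases hC with ⟨p, rfl⟩ | ⟨u, hut, rfl⟩
    · rw [card_mul_logb_card_of_subset_singleton 2 hR]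
      positivity
    · refine (ih u hut hR).trans (Nat.cast_le.2 (sum_le_sum_of_subset ?_))
      exact monotone_filter_right _ fun v _ hv => ⟨hv.1.trans_lt hut, hv.2.trans hCt⟩
  obtain ⟨A, B, hA, hB, hAB⟩ := hs t
  have hQA := operand_bound hA (hAB ▸ subset_union_left) (inter_subset_right : Q ∩ A ⊆ A)
  have hQB := operand_bound hB (hAB ▸ subset_union_right)
    (sdiff_le_iff.2 (hQ.trans hAB.le) : Q \ A ⊆ B)
  have hcard : (#Q : ℝ) = #(Q ∩ A) + #(Q \ A) := by
    exact_mod_cast (card_inter_add_card_sdiff Q A).symm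
  calc (#Q : ℝ) * logb 2 #Q
      ≤ #(Q ∩ A) * logb 2 #(Q ∩ A) + #(Q \ A) * logb 2 #(Q \ A) + #Q := by
        rw [hcard]
        exact add_mul_logb_two_add_le (by positivity) (by positivity)
    _ ≤ (∑ u with u < t ∧ s u ⊆ s t, #(s u ∩ (Q ∩ A)) : ℕ) +
          (∑ u with u < t ∧ s u ⊆ s t, #(s u ∩ (Q \ A)) : ℕ) + #Q := by gcongr
    _ = (∑ u with u ≤ t ∧ s u ⊆ s t, #(s u ∩ Q) : ℕ) := by
        rw [← card_add_sum_card_inter_lt hQ,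
          ← sum_card_inter_inter_add_sum_card_inter_sdiff _ s Q A]
        push_cast
        ring

theorem Computes.card_mul_logb_card_le (hc : Computes s 𝒯) (hs : ValidProg s) {T : Finset α}
    (hT : T ∈ 𝒯) :
    (#T : ℝ) * logb 2 #T ≤ (∑ u with s u ⊆ T, #(s u) : ℕ) := by
  rcases hc T hT with ⟨p, rfl⟩ | ⟨t, rfl⟩
  · rw [card_mul_logb_card_of_subset_singleton 2 Subset.rfl]
    positivity
  · refine (hs.card_mul_logb_card_le t Subset.rfl).trans (Nat.cast_le.2 ?_)
    calc ∑ u with u ≤ t ∧ s u ⊆ s t, #(s u ∩ s t)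
        ≤ ∑ u with u ≤ t ∧ s u ⊆ s t, #(s u) := by
          gcongr
          exact inter_subset_left
      _ ≤ ∑ u with s u ⊆ s t, #(s u) :=
          sum_le_sum_of_subset (monotone_filter_right _ fun _ _ hu => hu.2)

theorem sum_sum_card_subset_le {r : ℕ} (hr : ∀ A, #{T ∈ 𝒯 | A ⊆ T} * #A ≤ r) :
    ∑ T ∈ 𝒯, ∑ u with s u ⊆ T, #(s u) ≤ g * r :=
  calc ∑ T ∈ 𝒯, ∑ u with s u ⊆ T, #(s u)
      = ∑ u, #{T ∈ 𝒯 | s u ⊆ T} * #(s u) := by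
        simp only [sum_filter, card_eq_sum_ones, sum_mul, ite_mul, one_mul, zero_mul]
        exact sum_comm
    _ ≤ ∑ _u : Fin g, r := sum_le_sum fun u _ => hr (s u)
    _ = g * r := by simp

theorem ValidProg.volume_mul_logb_le (hs : ValidProg s) (hc : Computes s 𝒯) (h𝒯 : 𝒯.Nonempty)
    {r : ℕ} (hr : ∀ A, #{T ∈ 𝒯 | A ⊆ T} * #A ≤ r) :
    ((∑ T ∈ 𝒯, #T : ℕ) : ℝ) * logb 2 ((∑ T ∈ 𝒯, #T : ℕ) / #𝒯) ≤ g * r :=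
  calc ((∑ T ∈ 𝒯, #T : ℕ) : ℝ) * logb 2 ((∑ T ∈ 𝒯, #T : ℕ) / #𝒯)
      ≤ ∑ T ∈ 𝒯, (#T : ℝ) * logb 2 #T := by
        push_cast
        exact sum_mul_logb_sum_div_card_le one_lt_two h𝒯 fun _ _ => by positivity
    _ ≤ ∑ T ∈ 𝒯, ((∑ u with s u ⊆ T, #(s u) : ℕ) : ℝ) :=
        sum_le_sum fun _ hT => hc.card_mul_logb_card_le hs hT
    _ ≤ g * r := by exact_mod_cast sum_sum_card_subset_le hr

/- The subfamilies whose intersection contains `A` all lie in `{T ∈ 𝒯 | A ⊆ T}`, so `hr` says that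
`r` is an upper bound for the self-intersection measure of `𝒯`. -/
theorem or2_lower_bound_general (𝒯 : Finset (Finset α)) (h𝒯 : 𝒯.Nonempty)
    (hT : ∀ T ∈ 𝒯, T.Nonempty) {r : ℕ} (hr : ∀ A, #{T ∈ 𝒯 | A ⊆ T} * #A ≤ r) :
    ((∑ T ∈ 𝒯, #T : ℕ) : ℝ) / r * logb 2 ((∑ T ∈ 𝒯, #T : ℕ) / #𝒯) ≤ OR2 𝒯 := by
  obtain ⟨s, hs, hc⟩ := exists_validProg_or2_computes hT
  rw [div_mul_eq_mul_div]
  exact div_le_of_le_mul₀ (by positivity) (by positivity) (hs.volume_mul_logb_le hc h𝒯 hr)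

end Program

section Pattern

open Finset

variable {𝒯 : Finset (Finset (ℕ × ℕ))}

theorem mem_interF {R : Finset (Finset (ℕ × ℕ))} (hR : R.Nonempty) {p : ℕ × ℕ} :
    p ∈ interF R ↔ ∀ T ∈ R, p ∈ T := by
  obtain ⟨T, hT⟩ := hR
  exact mem_filter.trans (and_iff_right_of_imp fun h => mem_sup.2 ⟨T, hT, h T hT⟩)

theorem card_mul_card_interF_le_rmeas {R : Finset (Finset (ℕ × ℕ))} (hR : R.Nonempty)
    (hR𝒯 : R ⊆ 𝒯) : #R * #(interF R) ≤ rmeas 𝒯 :=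
  le_sup (f := fun R => #R * #(interF R)) (mem_filter.2 ⟨mem_powerset.2 hR𝒯, hR⟩)

theorem card_filter_subset_mul_card_le_rmeas (A : Finset (ℕ × ℕ)) :
    #{T ∈ 𝒯 | A ⊆ T} * #A ≤ rmeas 𝒯 := by
  rcases ({T ∈ 𝒯 | A ⊆ T} : Finset _).eq_empty_or_nonempty with hempty | hne
  · simp [hempty]
  · have hA : A ⊆ interF {T ∈ 𝒯 | A ⊆ T} := fun p hp =>
      (mem_interF hne).2 fun T hT => (mem_filter.1 hT).2 hp
    exact (Nat.mul_le_mul_left _ (card_le_card hA)).trans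
      (card_mul_card_interF_le_rmeas hne (filter_subset _ _))

theorem card_le_vol (hT : ∀ T ∈ 𝒯, T.Nonempty) : #𝒯 ≤ vol 𝒯 := by
  rw [card_eq_sum_ones]
  exact sum_le_sum fun T h => (hT T h).card_pos

end Pattern

/-- For every finite nonempty pattern set `𝒯` of nonempty patterns on an image, every
binary-union straight-line program computing `𝒯` has at least
`(3/2) · (V(𝒯)/r(𝒯)) · log₃(V(𝒯)/|𝒯|)` steps, i.e.
`OR2(𝒯) ≥ (3/2) · (V(𝒯)/r(𝒯)) · log₃(V(𝒯)/|𝒯|)`. -/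
theorem or2_lower_bound (𝒯 : Finset (Finset (ℕ × ℕ))) (h𝒯 : 𝒯.Nonempty)
    (hT : ∀ T ∈ 𝒯, T.Nonempty) :
    (3 / 2 : ℝ) * ((vol 𝒯 : ℝ) / (rmeas 𝒯 : ℝ)) *
        Real.logb 3 ((vol 𝒯 : ℝ) / (𝒯.card : ℝ)) ≤ (OR2 𝒯 : ℝ) := by
  have hle : (1 : ℝ) ≤ (vol 𝒯 : ℝ) / (𝒯.card : ℝ) :=
    (one_le_div (by exact_mod_cast h𝒯.card_pos)).2 (by exact_mod_cast card_le_vol hT)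
  rw [mul_right_comm, mul_comm]
  exact (mul_le_mul_of_nonneg_left (three_halves_mul_logb_three_le_logb_two hle)
    (by positivity)).trans
      (or2_lower_bound_general 𝒯 h𝒯 hT card_filter_subset_mul_card_le_rmeas)
end
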